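/- Let φ and φ_k (k ∈ ℕ) be functions ℝ² → ℝ, each continuous, positively 1-homogeneous, and positive on the unit sphere S¹. If φ_k → φ uniformly on S¹ as k → ∞, then the associated Wulff shapes converge in the Hausdorff distance: hausdorffDist(W_{φ_k}, W_φ) → 0 as k → ∞. -/

import Mathlib

open scoped RealInnerProductSpace

open Filter

/-- The Wulff shape of an anisotropic density `φ` on `ℝ²`:
`W_φ = {x : ⟪x, y⟫ ≤ φ(y) for all unit vectors y}`. -/
def WulffShape (φ : EuclideanSpace ℝ (Fin 2) → ℝ) : Set (EuclideanSpace ℝ (Fin 2)) :=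
  {x | ∀ y : EuclideanSpace ℝ (Fin 2), ‖y‖ = 1 → ⟪x, y⟫ ≤ φ y}

/-!
On the unit sphere `φ` is bounded below by some `m > 0`, so uniform convergence is multiplicative:
for each `c > 1`, eventually `φ_k ≤ c φ` and `φ ≤ c φ_k` there. Wulff shapes are monotone in the
density and `W_{cφ} = c W_φ`, hence `W_{φ_k} ⊆ c W_φ` and `W_φ ⊆ c W_{φ_k}`. As `W_φ` lies in the
ball of radius `M = max φ` over the sphere, the Hausdorff distance is at most `(c - 1) M`.
-/

open Metric Topology
open scoped Pointwise

theorem hausdorffDist_le_of_subset_smul {E : Type*} [SeminormedAddCommGroup E] [NormedSpace ℝ E]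
    {A B : Set E} {c M : ℝ} (hc : 1 ≤ c) (hM : 0 ≤ M) (hAB : A ⊆ c • B) (hBA : B ⊆ c • A)
    (hB : B ⊆ closedBall 0 M) : hausdorffDist A B ≤ (c - 1) * M := by
  have dist_smul_le (z : E) (hz : ‖z‖ ≤ M) : dist (c • z) z ≤ (c - 1) * M := calc
    dist (c • z) z = ‖(c - 1) • z‖ := by rw [dist_eq_norm, sub_smul, one_smul]
    _ = (c - 1) * ‖z‖ := norm_smul_of_nonneg (sub_nonneg.2 hc) z
    _ ≤ (c - 1) * M := mul_le_mul_of_nonneg_left hz (sub_nonneg.2 hc)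
  have norm_le (z : E) (hz : z ∈ B) : ‖z‖ ≤ M := mem_closedBall_zero_iff.1 (hB hz)
  refine hausdorffDist_le_of_mem_dist (mul_nonneg (sub_nonneg.2 hc) hM)
    (fun x hx => ?_) (fun x hx => ?_)
  · obtain ⟨z, hz, rfl⟩ := hAB hx
    exact ⟨z, hz, dist_smul_le z (norm_le z hz)⟩
  · obtain ⟨z, hz, rfl⟩ := hBA hx
    refine ⟨z, hz, dist_smul_le z ?_⟩
    calc
      ‖z‖ ≤ c * ‖z‖ := le_mul_of_one_le_left (norm_nonneg z) hc
      _ = ‖c • z‖ := (norm_smul_of_nonneg (zero_le_one.trans hc) z).symm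
      _ ≤ M := norm_le _ hx

theorem eventually_le_mul_of_tendstoUniformlyOn {α ι : Type*} {l : Filter ι} {F : ι → α → ℝ}
    {f : α → ℝ} {s : Set α} {m c : ℝ} (hF : TendstoUniformlyOn F f l s) (hm : 0 < m)
    (hf : ∀ y ∈ s, m ≤ f y) (hc : 1 < c) :
    ∀ᶠ i in l, ∀ y ∈ s, F i y ≤ c * f y ∧ f y ≤ c * F i y := by
  have hc₀ : 0 < c := one_pos.trans hc
  have hδ : 0 < (c - 1) * m / c := div_pos (mul_pos (sub_pos.2 hc) hm) hc₀
  filter_upwards [tendstoUniformlyOn_iff.1 hF _ hδ] with i hi y hy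
  have hclose : c * |f y - F i y| ≤ (c - 1) * f y := calc
    c * |f y - F i y| ≤ (c - 1) * m := ((lt_div_iff₀' hc₀).1 (hi y hy)).le
    _ ≤ (c - 1) * f y := mul_le_mul_of_nonneg_left (hf y hy) (sub_pos.2 hc).le
  constructor
  · have habs : |f y - F i y| ≤ c * |f y - F i y| := le_mul_of_one_le_left (abs_nonneg _) hc.le
    linarith [neg_le_abs (f y - F i y)]
  · linarith [mul_le_mul_of_nonneg_left (le_abs_self (f y - F i y)) hc₀.le]

section WulffSet

variable {E : Type*} [SeminormedAddCommGroup E] [InnerProductSpace ℝ E] {f g : E → ℝ} {c M : ℝ}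

/-- The Wulff shape of a density `f` on a real inner product space of any dimension; on `ℝ²` it is
`WulffShape f`. -/
def wulffSet (f : E → ℝ) : Set E :=
  {x | ∀ y ∈ sphere (0 : E) 1, ⟪x, y⟫ ≤ f y}

theorem wulffShape_eq_wulffSet (φ : EuclideanSpace ℝ (Fin 2) → ℝ) :
    WulffShape φ = wulffSet φ := by
  simp only [WulffShape, wulffSet, mem_sphere_zero_iff_norm]

theorem wulffSet_mono (h : ∀ y ∈ sphere (0 : E) 1, f y ≤ g y) : wulffSet f ⊆ wulffSet g :=
  fun _ hx y hy => (hx y hy).trans (h y hy)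

theorem wulffSet_smul (hc : 0 < c) (f : E → ℝ) : wulffSet (c • f) = c • wulffSet f := by
  ext x
  simp only [Set.mem_smul_set_iff_inv_smul_mem₀ hc.ne', wulffSet, Set.mem_ofPred_eq,
    real_inner_smul_left, Pi.smul_apply, smul_eq_mul, inv_mul_le_iff₀ hc]

theorem wulffSet_subset_closedBall (hM : 0 ≤ M) (hf : ∀ y ∈ sphere (0 : E) 1, f y ≤ M) :
    wulffSet f ⊆ closedBall 0 M := by
  intro x hx
  rw [mem_closedBall_zero_iff]
  rcases (norm_nonneg x).eq_or_lt' with hx₀ | hx₀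
  · exact hx₀.trans_le hM
  have hu : ‖x‖⁻¹ • x ∈ sphere (0 : E) 1 := by
    rw [mem_sphere_zero_iff_norm, norm_smul, norm_inv, norm_norm, inv_mul_cancel₀ hx₀.ne']
  calc
    ‖x‖ = ⟪x, ‖x‖⁻¹ • x⟫ := by
      rw [real_inner_smul_right, real_inner_self_eq_norm_mul_norm,
        inv_mul_cancel_left₀ hx₀.ne']
    _ ≤ f (‖x‖⁻¹ • x) := hx _ hu
    _ ≤ M := hf _ hu

theorem hausdorffDist_wulffSet_le (hc : 1 ≤ c) (hM : 0 ≤ M)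
    (hfg : ∀ y ∈ sphere (0 : E) 1, f y ≤ c * g y) (hgf : ∀ y ∈ sphere (0 : E) 1, g y ≤ c * f y)
    (hg : ∀ y ∈ sphere (0 : E) 1, g y ≤ M) :
    hausdorffDist (wulffSet f) (wulffSet g) ≤ (c - 1) * M := by
  have hc₀ : 0 < c := one_pos.trans_le hc
  refine hausdorffDist_le_of_subset_smul hc hM ?_ ?_ (wulffSet_subset_closedBall hM hg)
  · exact (wulffSet_mono hfg).trans_eq (wulffSet_smul hc₀ g)
  · exact (wulffSet_mono hgf).trans_eq (wulffSet_smul hc₀ f)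

theorem wulffShape_hausdorff_convergence_general {ι : Type*} {l : Filter ι} {φ : E → ℝ}
    {φk : ι → E → ℝ} (hpos : ∃ m > 0, ∀ y ∈ sphere (0 : E) 1, m ≤ φ y)
    (hbdd : BddAbove (φ '' sphere 0 1)) (hunif : TendstoUniformlyOn φk φ l (sphere 0 1)) :
    Tendsto (fun k => hausdorffDist (wulffSet (φk k)) (wulffSet φ)) l (𝓝 0) := by
  obtain ⟨m, hm, hφm⟩ := hpos
  obtain ⟨M, hM, hφM⟩ := hbdd.exists_ge 0
  rw [Set.forall_mem_image] at hφM
  have hlim : Tendsto (fun c : ℝ => (c - 1) * M) (𝓝[>] 1) (𝓝 0) :=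
    ((by fun_prop : Continuous fun c : ℝ => (c - 1) * M).tendsto' 1 0 (by simp)).mono_left
      nhdsWithin_le_nhds
  refine tendsto_order.2 ⟨fun a ha => .of_forall fun _ => ha.trans_le hausdorffDist_nonneg,
    fun ε hε => ?_⟩
  obtain ⟨c, hcε, hc : 1 < c⟩ := ((hlim.eventually_lt_const hε).and self_mem_nhdsWithin).exists
  filter_upwards [eventually_le_mul_of_tendstoUniformlyOn hunif hm hφm hc] with k hk
  exact (hausdorffDist_wulffSet_le hc.le hM (fun y hy => (hk y hy).1)
    (fun y hy => (hk y hy).2) hφM).trans_lt hcε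

end WulffSet

/-- If anisotropic densities `φ_k` (continuous, positively 1-homogeneous, positive on the
unit sphere) converge uniformly on the unit sphere to such a density `φ`, then the
associated Wulff shapes converge in the Hausdorff distance. -/
theorem wulffShape_hausdorff_convergence
    (φ : EuclideanSpace ℝ (Fin 2) → ℝ)
    (φk : ℕ → EuclideanSpace ℝ (Fin 2) → ℝ)
    (hcont : Continuous φ)
    (hhom : ∀ c : ℝ, 0 < c → ∀ x : EuclideanSpace ℝ (Fin 2), φ (c • x) = c * φ x)
    (hpos : ∀ y : EuclideanSpace ℝ (Fin 2), ‖y‖ = 1 → 0 < φ y)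
    (hcontk : ∀ k : ℕ, Continuous (φk k))
    (hhomk : ∀ k : ℕ, ∀ c : ℝ, 0 < c →
      ∀ x : EuclideanSpace ℝ (Fin 2), φk k (c • x) = c * φk k x)
    (hposk : ∀ k : ℕ, ∀ y : EuclideanSpace ℝ (Fin 2), ‖y‖ = 1 → 0 < φk k y)
    (hunif : TendstoUniformlyOn φk φ atTop {y : EuclideanSpace ℝ (Fin 2) | ‖y‖ = 1}) :
    Tendsto (fun k : ℕ => Metric.hausdorffDist (WulffShape (φk k)) (WulffShape φ))
      atTop (nhds 0) := by
  have hS : IsCompact (sphere (0 : EuclideanSpace ℝ (Fin 2)) 1) := isCompact_sphere 0 1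
  simp only [wulffShape_eq_wulffSet]
  exact wulffShape_hausdorff_convergence_general
    (hS.exists_forall_le' hcont.continuousOn fun y hy => hpos y (mem_sphere_zero_iff_norm.1 hy))
    (hS.bddAbove_image hcont.continuousOn)
    (hunif.mono fun _ hy => mem_sphere_zero_iff_norm.1 hy)
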